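/- (Eighth-order obstruction in the degenerate case) Let A₁ = A₂ = A₃ = 0 and let A₀ be smooth on a connected open U ⊆ ℝ² with ∂_y³A₀ ≠ 0 and 5∂_y²A₀ + y∂_y³A₀ ≠ 0 throughout U. If the Liouville linear system admits a smooth solution (ψ₁,ψ₂,ψ₃) on U, then at every point of U where ψ₁ψ₃ − ψ₂² ≠ 0 the identity 7(∂_y³A₀)(∂_y⁴A₀)(∂ₓ∂_y³A₀) − 5(∂ₓ∂_y³A₀)(∂_y⁵A₀)(∂_y²A₀) − 6(∂ₓ∂_y⁴A₀)(∂_y³A₀)² + 6(∂_y⁵A₀)(∂ₓ∂_y²A₀)(∂_y³A₀) − 7(∂_y⁴A₀)²(∂ₓ∂_y²A₀) + 5(∂ₓ∂_y⁴A₀)(∂_y⁴A₀)(∂_y²A₀) = 0 holds. -/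

import Mathlib

noncomputable section

open Matrix

/-- Partial derivative in the first (x) variable. -/
def pdx (f : ℝ × ℝ → ℝ) : ℝ × ℝ → ℝ :=
  fun p => deriv (fun t => f (t, p.2)) p.1

/-- Partial derivative in the second (y) variable. -/
def pdy (f : ℝ × ℝ → ℝ) : ℝ × ℝ → ℝ :=
  fun p => deriv (fun t => f (p.1, t)) p.2

/-- `pd 0 = ∂ₓ`, `pd 1 = ∂_y`. -/
def pd : Fin 2 → (ℝ × ℝ → ℝ) → (ℝ × ℝ → ℝ) := ![pdx, pdy]

/-- The Liouville linear system associated to `(A0, A1, A2, A3)`, holding on `U`. -/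
def LiouvilleSystem (U : Set (ℝ × ℝ)) (A0 A1 A2 A3 ψ1 ψ2 ψ3 : ℝ × ℝ → ℝ) : Prop :=
  ∀ p ∈ U,
    pdx ψ1 p = (2/3) * A1 p * ψ1 p - 2 * A0 p * ψ2 p ∧
    pdy ψ3 p = 2 * A3 p * ψ2 p - (2/3) * A2 p * ψ3 p ∧
    pdy ψ1 p + 2 * pdx ψ2 p
      = (4/3) * A2 p * ψ1 p - (2/3) * A1 p * ψ2 p - 2 * A0 p * ψ3 p ∧
    pdx ψ3 p + 2 * pdy ψ2 p
      = 2 * A3 p * ψ1 p - (4/3) * A1 p * ψ3 p + (2/3) * A2 p * ψ2 p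

/-- `(A0, A1, A2, A3)` is metrisable near `p` (within `U`). -/
def MetrisableNear (U : Set (ℝ × ℝ)) (A0 A1 A2 A3 : ℝ × ℝ → ℝ) (p : ℝ × ℝ) : Prop :=
  ∃ V : Set (ℝ × ℝ), IsOpen V ∧ p ∈ V ∧ V ⊆ U ∧
    ∃ E F G : ℝ × ℝ → ℝ,
      ContDiffOn ℝ (⊤ : ℕ∞) E V ∧ ContDiffOn ℝ (⊤ : ℕ∞) F V ∧ ContDiffOn ℝ (⊤ : ℕ∞) G V ∧
      (∀ q ∈ V, E q * G q - (F q) ^ 2 ≠ 0) ∧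
      (∀ q ∈ V,
        A0 q = (E q * pdy E q - 2 * E q * pdx F q + F q * pdx E q)
                 / (2 * (E q * G q - (F q) ^ 2)) ∧
        A1 q = (3 * F q * pdy E q + G q * pdx E q - 2 * F q * pdx F q - 2 * E q * pdx G q)
                 / (2 * (E q * G q - (F q) ^ 2)) ∧
        A2 q = (2 * F q * pdy F q + 2 * G q * pdy E q - 3 * F q * pdx G q - E q * pdy G q)
                 / (2 * (E q * G q - (F q) ^ 2)) ∧
        A3 q = (2 * G q * pdy F q - G q * pdx G q - F q * pdy G q)
                 / (2 * (E q * G q - (F q) ^ 2)))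

end

/-!
Write `a = A0`, `u = ψ2`, `w = ψ3`, with subscripts for partial derivatives. The system reads
`w_y = 0`, `w_x = -2 u_y`, `ψ1_x = -2 a u`, `ψ1_y = -2 a w - 2 u_x`, and its first two equations
give `u_yy = 0`. Equality of the mixed second derivatives of `ψ1` is
`a_y u + 3 a u_y - a_x w = u_xx`. As `u_yy = w_y = 0`, differentiating this relation in `y`
replaces `a` by `a_y` and increases the coefficient `3` by one, while the right-hand side vanishes
after two steps. Its second, third and fourth `y`-derivatives are therefore three homogeneous
linear equations for `(u, u_y, w)`, and the determinant of this linear system must vanish wherever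
`(u, u_y, w)` does not.
-/

section PartialDerivatives

open Set

variable {U : Set (ℝ × ℝ)} {f g : ℝ × ℝ → ℝ} {p : ℝ × ℝ} {m n : WithTop ℕ∞}

lemma hasDerivAt_pdx (hf : DifferentiableAt ℝ f p) :
    HasDerivAt (fun t ↦ f (t, p.2)) (pdx f p) p.1 :=
  (hf.comp p.1 (f := fun t ↦ (t, p.2)) (by fun_prop)).hasDerivAt

lemma hasDerivAt_pdy (hf : DifferentiableAt ℝ f p) :
    HasDerivAt (fun t ↦ f (p.1, t)) (pdy f p) p.2 :=
  (hf.comp p.2 (f := fun t ↦ (p.1, t)) (by fun_prop)).hasDerivAt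

lemma pdx_eq_fderiv (hf : DifferentiableAt ℝ f p) : pdx f p = fderiv ℝ f p (1, 0) :=
  (hf.hasFDerivAt.comp_hasDerivAt p.1
    ((hasDerivAt_id p.1).prodMk (hasDerivAt_const p.1 p.2))).deriv

lemma pdy_eq_fderiv (hf : DifferentiableAt ℝ f p) : pdy f p = fderiv ℝ f p (0, 1) :=
  (hf.hasFDerivAt.comp_hasDerivAt p.2
    ((hasDerivAt_const p.2 p.1).prodMk (hasDerivAt_id p.2))).deriv

lemma pdx_zero : pdx 0 = 0 := by
  ext p
  simp [pdx]

lemma pdy_zero : pdy 0 = 0 := by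
  ext p
  simp [pdy]

lemma pdx_const_mul (c : ℝ) : pdx (fun q ↦ c * f q) p = c * pdx f p :=
  deriv_const_mul_field c

lemma pdy_const_mul (c : ℝ) : pdy (fun q ↦ c * f q) p = c * pdy f p :=
  deriv_const_mul_field c

lemma pdy_add (hf : DifferentiableAt ℝ f p) (hg : DifferentiableAt ℝ g p) :
    pdy (fun q ↦ f q + g q) p = pdy f p + pdy g p :=
  ((hasDerivAt_pdy hf).add (hasDerivAt_pdy hg)).deriv

lemma pdx_sub (hf : DifferentiableAt ℝ f p) (hg : DifferentiableAt ℝ g p) :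
    pdx (fun q ↦ f q - g q) p = pdx f p - pdx g p :=
  ((hasDerivAt_pdx hf).sub (hasDerivAt_pdx hg)).deriv

lemma pdy_sub (hf : DifferentiableAt ℝ f p) (hg : DifferentiableAt ℝ g p) :
    pdy (fun q ↦ f q - g q) p = pdy f p - pdy g p :=
  ((hasDerivAt_pdy hf).sub (hasDerivAt_pdy hg)).deriv

lemma pdx_mul (hf : DifferentiableAt ℝ f p) (hg : DifferentiableAt ℝ g p) :
    pdx (fun q ↦ f q * g q) p = pdx f p * g p + f p * pdx g p :=
  ((hasDerivAt_pdx hf).mul (hasDerivAt_pdx hg)).deriv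

lemma pdy_mul (hf : DifferentiableAt ℝ f p) (hg : DifferentiableAt ℝ g p) :
    pdy (fun q ↦ f q * g q) p = pdy f p * g p + f p * pdy g p :=
  ((hasDerivAt_pdy hf).mul (hasDerivAt_pdy hg)).deriv

lemma eqOn_pdx (hU : IsOpen U) (h : EqOn f g U) : EqOn (pdx f) (pdx g) U := fun p hp ↦ by
  have hc : ContinuousAt (fun t : ℝ ↦ (t, p.2)) p.1 := by fun_prop
  exact ((h.eventuallyEq_of_mem (hU.mem_nhds hp)).comp_tendsto hc).deriv_eq

lemma eqOn_pdy (hU : IsOpen U) (h : EqOn f g U) : EqOn (pdy f) (pdy g) U := fun p hp ↦ by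
  have hc : ContinuousAt (fun t : ℝ ↦ (p.1, t)) p.2 := by fun_prop
  exact ((h.eventuallyEq_of_mem (hU.mem_nhds hp)).comp_tendsto hc).deriv_eq

lemma eqOn_pdx_fderiv (hU : IsOpen U) (hf : DifferentiableOn ℝ f U) :
    EqOn (pdx f) (fun q ↦ fderiv ℝ f q (1, 0)) U :=
  fun _ hp ↦ pdx_eq_fderiv (hf.differentiableAt (hU.mem_nhds hp))

lemma eqOn_pdy_fderiv (hU : IsOpen U) (hf : DifferentiableOn ℝ f U) :
    EqOn (pdy f) (fun q ↦ fderiv ℝ f q (0, 1)) U :=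
  fun _ hp ↦ pdy_eq_fderiv (hf.differentiableAt (hU.mem_nhds hp))

lemma contDiffOn_pdx (hU : IsOpen U) (hf : ContDiffOn ℝ n f U) (hmn : m + 1 ≤ n) :
    ContDiffOn ℝ m (pdx f) U :=
  ((hf.fderiv_of_isOpen hU hmn).clm_apply contDiffOn_const).congr
    (eqOn_pdx_fderiv hU ((hf.of_le hmn).differentiableOn (by simp)))

lemma contDiffOn_pdy (hU : IsOpen U) (hf : ContDiffOn ℝ n f U) (hmn : m + 1 ≤ n) :
    ContDiffOn ℝ m (pdy f) U :=
  ((hf.fderiv_of_isOpen hU hmn).clm_apply contDiffOn_const).congr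
    (eqOn_pdy_fderiv hU ((hf.of_le hmn).differentiableOn (by simp)))

lemma fderiv_fderiv_apply (hf : DifferentiableAt ℝ (fderiv ℝ f) p) (v w : ℝ × ℝ) :
    fderiv ℝ (fun q ↦ fderiv ℝ f q v) p w = fderiv ℝ (fderiv ℝ f) p w v := by
  simp [fderiv_clm_apply hf (differentiableAt_const v)]

lemma pdx_pdy_comm (hU : IsOpen U) (hf : ContDiffOn ℝ 2 f U) :
    EqOn (pdx (pdy f)) (pdy (pdx f)) U := fun p hp ↦ by
  have hf' : DifferentiableOn ℝ f U := hf.differentiableOn (by simp)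
  have hdf : DifferentiableAt ℝ (fderiv ℝ f) p :=
    ((hf.fderiv_of_isOpen (m := 1) hU (by norm_num)).differentiableOn
      (by simp)).differentiableAt (hU.mem_nhds hp)
  have hsymm : IsSymmSndFDerivAt ℝ f p :=
    (hf.contDiffAt (hU.mem_nhds hp)).isSymmSndFDerivAt (by simp)
  calc pdx (pdy f) p
      = fderiv ℝ (fderiv ℝ f) p (1, 0) (0, 1) := by
        rw [eqOn_pdx hU (eqOn_pdy_fderiv hU hf') hp, pdx_eq_fderiv (by fun_prop),
          fderiv_fderiv_apply hdf]
    _ = fderiv ℝ (fderiv ℝ f) p (0, 1) (1, 0) := hsymm _ _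
    _ = pdy (pdx f) p := by
        rw [eqOn_pdy hU (eqOn_pdx_fderiv hU hf') hp, pdy_eq_fderiv (by fun_prop),
          fderiv_fderiv_apply hdf]

lemma eqOn_iterate_pdy (hU : IsOpen U) (h : EqOn f g U) (k : ℕ) :
    EqOn (pdy^[k] f) (pdy^[k] g) U := by
  induction k generalizing f g with
  | zero => exact h
  | succ _ ih => exact ih (eqOn_pdy hU h)

lemma iterate_pdy_pdx_comm (hU : IsOpen U) (k : ℕ) (hf : ContDiffOn ℝ (k + 1) f U) :
    EqOn (pdy^[k] (pdx f)) (pdx (pdy^[k] f)) U := by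
  induction k generalizing f with
  | zero => exact eqOn_refl _ _
  | succ k ih =>
    push_cast at hf
    have hf₂ : ContDiffOn ℝ 2 f U := hf.of_le (by rw [add_assoc, one_add_one_eq_two]; simp)
    exact (eqOn_iterate_pdy hU (pdx_pdy_comm hU hf₂).symm k).trans
      (ih (contDiffOn_pdy hU hf le_rfl))

lemma iterate_pdy_pdx_pdx_eqOn_zero (hU : IsOpen U) (k : ℕ) (hf : ContDiffOn ℝ (k + 2) f U)
    (hk : EqOn (pdy^[k] f) 0 U) : EqOn (pdy^[k] (pdx (pdx f))) 0 U := fun p hp ↦ by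
  rw [← one_add_one_eq_two, ← add_assoc] at hf
  calc pdy^[k] (pdx (pdx f)) p
      = pdx (pdy^[k] (pdx f)) p := iterate_pdy_pdx_comm hU k (contDiffOn_pdx hU hf le_rfl) hp
    _ = pdx (pdx (pdy^[k] f)) p :=
        eqOn_pdx hU (iterate_pdy_pdx_comm hU k (hf.of_le le_self_add)) hp
    _ = pdx (pdx 0) p := eqOn_pdx hU (eqOn_pdx hU hk) hp
    _ = 0 := by simp only [pdx_zero, Pi.zero_apply]

lemma iterate_pdy_eqOn_zero_of_le (hU : IsOpen U) {j k : ℕ} (hjk : j ≤ k)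
    (h : EqOn (pdy^[j] f) 0 U) : EqOn (pdy^[k] f) 0 U := by
  rw [← Nat.sub_add_cancel hjk, Function.iterate_add_apply,
    ← Function.iterate_fixed pdy_zero (k - j)]
  exact eqOn_iterate_pdy hU h _

end PartialDerivatives

section Prolongation

open Set

variable {U : Set (ℝ × ℝ)} {a u w k : ℝ × ℝ → ℝ} {c : ℝ}

lemma pdy_linear_relation (hU : IsOpen U) (ha : ContDiffOn ℝ 2 a U) (hu : ContDiffOn ℝ 2 u U)
    (hw : DifferentiableOn ℝ w U) (huyy : EqOn (pdy (pdy u)) 0 U)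
    (hwy : EqOn (pdy w) 0 U)
    (h : ∀ p ∈ U, pdy a p * u p + c * a p * pdy u p - pdx a p * w p = k p) :
    ∀ p ∈ U, pdy (pdy a) p * u p + (c + 1) * pdy a p * pdy u p - pdx (pdy a) p * w p
      = pdy k p := by
  intro p hp
  have differentiableAt_of_contDiffOn {f : ℝ × ℝ → ℝ} (hf : ContDiffOn ℝ 1 f U) :
      DifferentiableAt ℝ f p :=
    (hf.differentiableOn one_ne_zero).differentiableAt (hU.mem_nhds hp)
  have ha₀ := differentiableAt_of_contDiffOn (ha.of_le one_le_two)
  have hax := differentiableAt_of_contDiffOn (contDiffOn_pdx hU ha one_add_one_eq_two.le)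
  have hay := differentiableAt_of_contDiffOn (contDiffOn_pdy hU ha one_add_one_eq_two.le)
  have hu₀ := differentiableAt_of_contDiffOn (hu.of_le one_le_two)
  have huy := differentiableAt_of_contDiffOn (contDiffOn_pdy hU hu one_add_one_eq_two.le)
  have hw₀ := hw.differentiableAt (hU.mem_nhds hp)
  have leibniz : pdy (fun q ↦ pdy a q * u q + c * a q * pdy u q - pdx a q * w q) p
      = (pdy (pdy a) p * u p + pdy a p * pdy u p)
        + (c * pdy a p * pdy u p + c * a p * pdy (pdy u) p)
        - (pdy (pdx a) p * w p + pdx a p * pdy w p) := by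
    rw [pdy_sub (by fun_prop) (by fun_prop), pdy_add (by fun_prop) (by fun_prop),
      pdy_mul hay hu₀, pdy_mul (by fun_prop) huy, pdy_mul hax hw₀, pdy_const_mul]
  rw [eqOn_pdy hU h hp, huyy hp, hwy hp, ← pdx_pdy_comm hU ha hp] at leibniz
  simp only [leibniz, Pi.zero_apply]
  ring

lemma iterate_pdy_linear_relation (hU : IsOpen U) (n : ℕ) (ha : ContDiffOn ℝ (n + 1) a U)
    (hu : ContDiffOn ℝ 2 u U) (hw : DifferentiableOn ℝ w U)
    (huyy : EqOn (pdy (pdy u)) 0 U) (hwy : EqOn (pdy w) 0 U)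
    (h : ∀ p ∈ U, pdy a p * u p + c * a p * pdy u p - pdx a p * w p = k p) :
    ∀ p ∈ U, pdy^[n + 1] a p * u p + (c + n) * pdy^[n] a p * pdy u p - pdx (pdy^[n] a) p * w p
      = pdy^[n] k p := by
  induction n generalizing a c k with
  | zero => simpa using h
  | succ n ih =>
    push_cast at ha ⊢
    have ha₂ : ContDiffOn ℝ 2 a U := ha.of_le (by rw [add_assoc, one_add_one_eq_two]; simp)
    intro p hp
    rw [add_comm (n : ℝ) 1, ← add_assoc]
    exact ih (contDiffOn_pdy hU ha le_rfl)
      (pdy_linear_relation hU ha₂ hu hw huyy hwy h) p hp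

end Prolongation

/-- The matrix of the linear system that the second, third and fourth `y`-derivatives of
`a_y u + 3 a u_y - a_x w = u_xx` impose on `(u, u_y, w)`, where `u = ψ2` and `w = ψ3` come from
a solution of the Liouville system of `(a, 0, 0, 0)`. Row `i` holds the coefficients of the
derivative of order `i + 2`. -/
noncomputable def prolongationMatrix (a : ℝ × ℝ → ℝ) (q : ℝ × ℝ) : Matrix (Fin 3) (Fin 3) ℝ :=
  Matrix.of fun i ↦ ![pdy^[i + 3] a q, ((i : ℕ) + 5) * pdy^[i + 2] a q, -pdx (pdy^[i + 2] a) q]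

lemma det_prolongationMatrix (a : ℝ × ℝ → ℝ) (q : ℝ × ℝ) :
    (prolongationMatrix a q).det =
      7 * (pdy^[3] a q) * (pdy^[4] a q) * (pdx (pdy^[3] a) q)
        - 5 * (pdx (pdy^[3] a) q) * (pdy^[5] a q) * (pdy^[2] a q)
        - 6 * (pdx (pdy^[4] a) q) * (pdy^[3] a q) ^ 2
        + 6 * (pdy^[5] a q) * (pdx (pdy^[2] a) q) * (pdy^[3] a q)
        - 7 * (pdy^[4] a q) ^ 2 * (pdx (pdy^[2] a) q)
        + 5 * (pdx (pdy^[4] a) q) * (pdy^[4] a q) * (pdy^[2] a q) := by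
  simp only [prolongationMatrix, Matrix.det_fin_three, Matrix.of_apply, Matrix.cons_val,
    Fin.val_zero, Fin.val_one, Fin.val_two, Nat.reduceAdd]
  push_cast
  ring

namespace LiouvilleSystem

open Set

variable {U : Set (ℝ × ℝ)} {a ψ1 ψ2 ψ3 : ℝ × ℝ → ℝ}
  (h : LiouvilleSystem U a (fun _ ↦ 0) (fun _ ↦ 0) (fun _ ↦ 0) ψ1 ψ2 ψ3)

include h

lemma pdx_psi1 : EqOn (pdx ψ1) (fun p ↦ -2 * (a p * ψ2 p)) U := fun p hp ↦ by
  linear_combination (h p hp).1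

lemma pdy_psi1 : EqOn (pdy ψ1) (fun p ↦ -2 * (a p * ψ3 p) - 2 * pdx ψ2 p) U := fun p hp ↦ by
  linear_combination (h p hp).2.2.1

lemma pdx_psi3 : EqOn (pdx ψ3) (fun p ↦ -2 * pdy ψ2 p) U := fun p hp ↦ by
  linear_combination (h p hp).2.2.2

lemma pdy_psi3 : EqOn (pdy ψ3) 0 U := fun p hp ↦ by
  simpa using (h p hp).2.1

lemma pdy_pdy_psi2 (hU : IsOpen U) (hψ3 : ContDiffOn ℝ 2 ψ3 U) : EqOn (pdy (pdy ψ2)) 0 U := by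
  intro p hp
  have hyx : -2 * pdy (pdy ψ2) p = 0 := calc
    -2 * pdy (pdy ψ2) p = pdy (pdx ψ3) p := by rw [eqOn_pdy hU h.pdx_psi3 hp, pdy_const_mul]
    _ = pdx (pdy ψ3) p := (pdx_pdy_comm hU hψ3 hp).symm
    _ = 0 := by rw [eqOn_pdx hU h.pdy_psi3 hp, pdx_zero, Pi.zero_apply]
  simpa using hyx

lemma linear_relation (hU : IsOpen U) (ha : DifferentiableOn ℝ a U) (hψ1 : ContDiffOn ℝ 2 ψ1 U)
    (hψ2 : ContDiffOn ℝ 2 ψ2 U) (hψ3 : DifferentiableOn ℝ ψ3 U) :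
    ∀ p ∈ U, pdy a p * ψ2 p + 3 * a p * pdy ψ2 p - pdx a p * ψ3 p = pdx (pdx ψ2) p := by
  intro p hp
  have hpU := hU.mem_nhds hp
  have ha' := ha.differentiableAt hpU
  have hψ2' := (hψ2.differentiableOn two_ne_zero).differentiableAt hpU
  have hψ2x := ((contDiffOn_pdx hU hψ2 one_add_one_eq_two.le).differentiableOn
    one_ne_zero).differentiableAt hpU
  have hψ3' := hψ3.differentiableAt hpU
  have hyx : pdy (pdx ψ1) p = -2 * (pdy a p * ψ2 p + a p * pdy ψ2 p) := by
    rw [eqOn_pdy hU h.pdx_psi1 hp, pdy_const_mul, pdy_mul ha' hψ2']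
  have hxy : pdx (pdy ψ1) p
      = -2 * (pdx a p * ψ3 p + a p * (-2 * pdy ψ2 p)) - 2 * pdx (pdx ψ2) p := by
    rw [eqOn_pdx hU h.pdy_psi1 hp, pdx_sub (by fun_prop) (by fun_prop), pdx_const_mul,
      pdx_const_mul, pdx_mul ha' hψ3', h.pdx_psi3 hp]
  linear_combination (hyx - hxy + pdx_pdy_comm hU hψ1 hp) / 2

lemma iterate_pdy_linear_relation_eq_zero (hU : IsOpen U) {n : ℕ} (hn : 2 ≤ n)
    (ha : ContDiffOn ℝ (n + 1) a U) (hψ1 : ContDiffOn ℝ 2 ψ1 U) (hψ2 : ContDiffOn ℝ 4 ψ2 U)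
    (hψ3 : ContDiffOn ℝ 2 ψ3 U) :
    ∀ p ∈ U, pdy^[n + 1] a p * ψ2 p + (3 + n) * pdy^[n] a p * pdy ψ2 p
      - pdx (pdy^[n] a) p * ψ3 p = 0 := by
  intro p hp
  have hψ2yy := h.pdy_pdy_psi2 hU hψ3
  have hψ2' : ContDiffOn ℝ 2 ψ2 U := hψ2.of_le (by norm_num)
  have hψ3' : DifferentiableOn ℝ ψ3 U := hψ3.differentiableOn two_ne_zero
  have rhs_eq_zero : EqOn (pdy^[n] (pdx (pdx ψ2))) 0 U :=
    iterate_pdy_eqOn_zero_of_le hU hn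
      (iterate_pdy_pdx_pdx_eqOn_zero hU 2 (hψ2.of_le (by norm_num)) hψ2yy)
  exact (iterate_pdy_linear_relation hU n ha hψ2' hψ3' hψ2yy h.pdy_psi3
    (h.linear_relation hU (ha.differentiableOn (by simp)) hψ1 hψ2' hψ3') p hp).trans
    (rhs_eq_zero hp)

lemma prolongationMatrix_mulVec (hU : IsOpen U) (ha : ContDiffOn ℝ 5 a U)
    (hψ1 : ContDiffOn ℝ 2 ψ1 U) (hψ2 : ContDiffOn ℝ 4 ψ2 U) (hψ3 : ContDiffOn ℝ 2 ψ3 U)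
    {q : ℝ × ℝ} (hq : q ∈ U) :
    (prolongationMatrix a q).mulVec ![ψ2 q, pdy ψ2 q, ψ3 q] = 0 := by
  ext i
  have relation := h.iterate_pdy_linear_relation_eq_zero hU (n := i + 2) (by simp)
    (ha.of_le (by norm_cast; omega)) hψ1 hψ2 hψ3 q hq
  push_cast at relation
  simp only [prolongationMatrix, Matrix.mulVec, dotProduct, Fin.sum_univ_three, Matrix.of_apply,
    Matrix.cons_val, Pi.zero_apply]
  linear_combination relation

end LiouvilleSystem

theorem degenerate_eighth_order_obstruction_general (U : Set (ℝ × ℝ)) (hU : IsOpen U)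
    (A0 : ℝ × ℝ → ℝ) (hA0 : ContDiffOn ℝ 5 A0 U) (ψ1 ψ2 ψ3 : ℝ × ℝ → ℝ)
    (hψ1 : ContDiffOn ℝ 2 ψ1 U) (hψ2 : ContDiffOn ℝ 4 ψ2 U) (hψ3 : ContDiffOn ℝ 2 ψ3 U)
    (hsys : LiouvilleSystem U A0 (fun _ ↦ 0) (fun _ ↦ 0) (fun _ ↦ 0) ψ1 ψ2 ψ3) :
    ∀ q ∈ U, ![ψ2 q, pdy ψ2 q, ψ3 q] ≠ 0 →
      7 * (pdy^[3] A0 q) * (pdy^[4] A0 q) * (pdx (pdy^[3] A0) q)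
        - 5 * (pdx (pdy^[3] A0) q) * (pdy^[5] A0 q) * (pdy^[2] A0 q)
        - 6 * (pdx (pdy^[4] A0) q) * (pdy^[3] A0 q) ^ 2
        + 6 * (pdy^[5] A0 q) * (pdx (pdy^[2] A0) q) * (pdy^[3] A0 q)
        - 7 * (pdy^[4] A0 q) ^ 2 * (pdx (pdy^[2] A0) q)
        + 5 * (pdx (pdy^[4] A0) q) * (pdy^[4] A0 q) * (pdy^[2] A0 q) = 0 := by
  intro q hq hne
  rw [← det_prolongationMatrix]
  exact Matrix.exists_mulVec_eq_zero_iff.mp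
    ⟨_, hne, hsys.prolongationMatrix_mulVec hU hA0 hψ1 hψ2 hψ3 hq⟩

/-- **Eighth-order obstruction in the degenerate case** `A₁ = A₂ = A₃ = 0`. -/
theorem degenerate_eighth_order_obstruction (U : Set (ℝ × ℝ)) (hU : IsOpen U)
    (hUconn : IsConnected U) (A0 : ℝ × ℝ → ℝ) (hA0 : ContDiffOn ℝ (⊤ : ℕ∞) A0 U)
    (hnd1 : ∀ q ∈ U, pdy^[3] A0 q ≠ 0)
    (hnd2 : ∀ q ∈ U, 5 * pdy^[2] A0 q + q.2 * pdy^[3] A0 q ≠ 0)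
    (ψ1 ψ2 ψ3 : ℝ × ℝ → ℝ)
    (hψ1 : ContDiffOn ℝ (⊤ : ℕ∞) ψ1 U) (hψ2 : ContDiffOn ℝ (⊤ : ℕ∞) ψ2 U) (hψ3 : ContDiffOn ℝ (⊤ : ℕ∞) ψ3 U)
    (hsys : LiouvilleSystem U A0 (fun _ => 0) (fun _ => 0) (fun _ => 0) ψ1 ψ2 ψ3) :
    ∀ q ∈ U, ψ1 q * ψ3 q - (ψ2 q) ^ 2 ≠ 0 →
      7 * (pdy^[3] A0 q) * (pdy^[4] A0 q) * (pdx (pdy^[3] A0) q)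
        - 5 * (pdx (pdy^[3] A0) q) * (pdy^[5] A0 q) * (pdy^[2] A0 q)
        - 6 * (pdx (pdy^[4] A0) q) * (pdy^[3] A0 q) ^ 2
        + 6 * (pdy^[5] A0 q) * (pdx (pdy^[2] A0) q) * (pdy^[3] A0 q)
        - 7 * (pdy^[4] A0 q) ^ 2 * (pdx (pdy^[2] A0) q)
        + 5 * (pdx (pdy^[4] A0) q) * (pdy^[4] A0 q) * (pdy^[2] A0 q) = 0 := by
  intro q hq hdet
  have hle (n : ℕ) : (n : WithTop ℕ∞) ≤ (⊤ : ℕ∞) := mod_cast le_top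
  exact degenerate_eighth_order_obstruction_general U hU A0 (hA0.of_le (hle 5)) ψ1 ψ2 ψ3
    (hψ1.of_le (hle 2)) (hψ2.of_le (hle 4)) (hψ3.of_le (hle 2)) hsys q hq fun h ↦
      hdet (by simp [show ψ2 q = 0 from congrFun h 0, show ψ3 q = 0 from congrFun h 2])
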